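/- There is an absolute constant d > 0 such that every string graph with m ≥ 2 edges has a separator of size at most d·√m·log₂ m. -/

import Mathlib

/-- A curve in the plane: the image of a continuous map from `[0,1]` to `ℝ²`. -/
def IsCurve (c : Set (ℝ × ℝ)) : Prop :=
  ∃ f : ℝ → ℝ × ℝ, ContinuousOn f (Set.Icc 0 1) ∧ c = f '' Set.Icc 0 1

/-- A string graph: an intersection graph of curves in the plane. -/
def IsStringGraph {V : Type*} (G : SimpleGraph V) : Prop :=
  ∃ γ : V → Set (ℝ × ℝ), (∀ v, IsCurve (γ v)) ∧
    ∀ u v : V, u ≠ v → (G.Adj u v ↔ (γ u ∩ γ v).Nonempty)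

/-- `S` is a separator of `G`: the vertex set is partitioned as `S ∪ V₁ ∪ V₂` with
`|V₁|, |V₂| ≤ (2/3)|V|` and no edges between `V₁` and `V₂`. -/
def IsSeparator {V : Type*} [Fintype V] [DecidableEq V]
    (G : SimpleGraph V) (S : Finset V) : Prop :=
  ∃ V₁ V₂ : Finset V,
    S ∪ V₁ ∪ V₂ = Finset.univ ∧
    Disjoint S V₁ ∧ Disjoint S V₂ ∧ Disjoint V₁ V₂ ∧
    (V₁.card : ℝ) ≤ 2 / 3 * Fintype.card V ∧
    (V₂.card : ℝ) ≤ 2 / 3 * Fintype.card V ∧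
    ∀ u ∈ V₁, ∀ v ∈ V₂, ¬ G.Adj u v

/-!
Suppose that every separator has more than `k` vertices. For any distribution of weight over the
vertices, cutting off balls by low-weight shells must then leave a *cluster*: most of the vertices
are joined to one center by light routes, of weight `O(log n / k)`. By the minimax theorem one
random cluster has light routes for all weights simultaneously. Joining pairs of vertices through
the center of a random cluster gives random routes between the pairs of a quarter of the vertices
such that the expected number of routes through each vertex is only `O(n² log n / k)`.

Choose five random vertices and join all of them by independent random routes. Since `K₅` is not
planar, two routes with disjoint ends share a vertex or are joined by an edge. The congestion bound
makes the expected number of such contacts `O((n + 2m) (log n / k)²)`, whence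
`k = O(√(n + 2m) log n)`. If `n ≥ 3m`, the many isolated vertices make the empty set a separator;
otherwise `n = O(m)`.

The planarity of string graphs enters through a single property, `HasTouchingRoutes`: a continuous
logarithm of `γ s - γ' t` on the unit square, for disjoint edges `γ` and `γ'` of a drawing, relates
the angles by which these edges turn around the ends of each other, and modulo `2` these relations
are inconsistent for `K₅`.
-/

open Finset
open scoped unitInterval BigOperators

section LogIncrement

theorem contractibleSpace_unitInterval : ContractibleSpace I :=
  (convex_Icc (0 : ℝ) 1).contractibleSpace ⟨0, by simp⟩

theorem locallyPathConnectedSpace_unitInterval : LocallyPathConnectedSpace I :=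
  (convex_Icc (0 : ℝ) 1).locallyPathConnectedSpace

attribute [local instance] contractibleSpace_unitInterval locallyPathConnectedSpace_unitInterval

theorem exists_continuous_exp_eq {A : Type*} [TopologicalSpace A] [SimplyConnectedSpace A]
    [LocallyPathConnectedSpace A] {f : A → ℂ} (hf : Continuous f) (hf₀ : ∀ a, f a ≠ 0) :
    ∃ L : A → ℂ, Continuous L ∧ ∀ a, Complex.exp (L a) = f a := by
  obtain ⟨a₀⟩ : Nonempty A := inferInstance
  obtain ⟨L, ⟨-, hL⟩, -⟩ := Complex.isCoveringMapOn_exp.existsUnique_continuousMap_lifts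
    ⟨f, hf⟩ (Complex.exp_log (hf₀ a₀)) (by simpa using hf₀)
  exact ⟨L, L.continuous, congrFun hL⟩

/-- The total change along `f` of a continuous logarithm of `f`; the junk value is `0` when `f` has
no continuous logarithm. -/
noncomputable def logIncrement (f : I → ℂ) : ℂ :=
  open Classical in
  if h : ∃ L : I → ℂ, Continuous L ∧ ∀ t, Complex.exp (L t) = f t then h.choose 1 - h.choose 0
  else 0

theorem sub_eq_sub_of_exp_eq_exp {L M : I → ℂ} (hL : Continuous L) (hM : Continuous M)
    (h : ∀ t, Complex.exp (L t) = Complex.exp (M t)) : L 1 - L 0 = M 1 - M 0 := by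
  have hconst : (fun t ↦ L t - M t) = fun _ ↦ L 0 - M 0 :=
    Complex.isCoveringMap_exp.eq_of_comp_eq (by fun_prop) (by fun_prop)
      (by ext t; simp [Complex.exp_sub, h]) 0 rfl
  linear_combination congrFun hconst 1

theorem logIncrement_eq {f L : I → ℂ} (hL : Continuous L) (h : ∀ t, Complex.exp (L t) = f t) :
    logIncrement f = L 1 - L 0 := by
  have hf : ∃ L : I → ℂ, Continuous L ∧ ∀ t, Complex.exp (L t) = f t := ⟨L, hL, h⟩
  rw [logIncrement, dif_pos hf]
  exact sub_eq_sub_of_exp_eq_exp hf.choose_spec.1 hL fun t ↦ by rw [hf.choose_spec.2, h]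

theorem logIncrement_neg {f : I → ℂ} (hf : Continuous f) (hf₀ : ∀ t, f t ≠ 0) :
    logIncrement (fun t ↦ -f t) = logIncrement f := by
  obtain ⟨L, hL, hLf⟩ := exists_continuous_exp_eq hf hf₀
  rw [logIncrement_eq hL hLf, logIncrement_eq (L := fun t ↦ L t + Real.pi * Complex.I) (by fun_prop)
    fun t ↦ by rw [Complex.exp_add, hLf, Complex.exp_pi_mul_I, mul_neg_one]]
  ring

theorem exp_logIncrement {f : I → ℂ} (hf : Continuous f) (hf₀ : ∀ t, f t ≠ 0) :
    Complex.exp (logIncrement f) = f 1 / f 0 := by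
  obtain ⟨L, hL, hLf⟩ := exists_continuous_exp_eq hf hf₀
  rw [logIncrement_eq hL hLf, Complex.exp_sub, hLf, hLf]

theorem logIncrement_square {F : I × I → ℂ} (hF : Continuous F) (hF₀ : ∀ z, F z ≠ 0) :
    logIncrement (fun s ↦ F (s, 0)) + logIncrement (fun t ↦ F (1, t)) =
      logIncrement (fun t ↦ F (0, t)) + logIncrement (fun s ↦ F (s, 1)) := by
  obtain ⟨L, hL, hLF⟩ := exists_continuous_exp_eq hF hF₀
  rw [logIncrement_eq (L := fun s ↦ L (s, 0)) (by fun_prop) fun _ ↦ hLF _,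
    logIncrement_eq (L := fun t ↦ L (1, t)) (by fun_prop) fun _ ↦ hLF _,
    logIncrement_eq (L := fun t ↦ L (0, t)) (by fun_prop) fun _ ↦ hLF _,
    logIncrement_eq (L := fun s ↦ L (s, 1)) (by fun_prop) fun _ ↦ hLF _]
  ring

end LogIncrement

section PlaneDrawing

/-- The parity of the number of crossings of independent edges in a drawing of `K₅` with vertices in
convex position, where crossings correspond to interleaved pairs `i < k < j < l`: each `n i j k`
occurs in two of the fifteen equations, so their sum would make the number five of interleaved pairs
even. -/
theorem not_forall_two_mul_add_orderSign_eq_zero (n : Fin 5 → Fin 5 → Fin 5 → ℤ) :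
    ¬ ∀ e : Fin 4 ↪ Fin 5,
      2 * (n (e 0) (e 1) (e 2) + n (e 2) (e 3) (e 1) - n (e 0) (e 1) (e 3) - n (e 2) (e 3) (e 0)) +
        (if e 1 < e 2 then -1 else 1) - (if e 0 < e 2 then -1 else 1) -
        (if e 1 < e 3 then -1 else 1) + (if e 0 < e 3 then -1 else 1) = 0 := by
  intro h
  have h₀₁₂₃ := h ⟨![0, 1, 2, 3], by decide⟩
  have h₀₁₂₄ := h ⟨![0, 1, 2, 4], by decide⟩
  have h₀₁₃₄ := h ⟨![0, 1, 3, 4], by decide⟩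
  have h₀₂₁₃ := h ⟨![0, 2, 1, 3], by decide⟩
  have h₀₂₁₄ := h ⟨![0, 2, 1, 4], by decide⟩
  have h₀₂₃₄ := h ⟨![0, 2, 3, 4], by decide⟩
  have h₀₃₁₂ := h ⟨![0, 3, 1, 2], by decide⟩
  have h₀₃₁₄ := h ⟨![0, 3, 1, 4], by decide⟩
  have h₀₃₂₄ := h ⟨![0, 3, 2, 4], by decide⟩
  have h₀₄₁₂ := h ⟨![0, 4, 1, 2], by decide⟩
  have h₀₄₁₃ := h ⟨![0, 4, 1, 3], by decide⟩
  have h₀₄₂₃ := h ⟨![0, 4, 2, 3], by decide⟩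
  have h₁₂₃₄ := h ⟨![1, 2, 3, 4], by decide⟩
  have h₁₃₂₄ := h ⟨![1, 3, 2, 4], by decide⟩
  have h₁₄₂₃ := h ⟨![1, 4, 2, 3], by decide⟩
  simp only [Function.Embedding.coeFn_mk, Matrix.cons_val, Fin.reduceLT, if_true, if_false] at *
  omega

/-- The drawing of the complete graph on `ι` given by the points `p i` and the paths `γ i j` has no
crossing between edges without common endpoint; the edges are listed by embeddings `e` of `Fin 4`,
as `e 0 e 1` and `e 2 e 3`. -/
def IndependentEdgesDisjoint {ι X : Type*} [TopologicalSpace X] {p : ι → X}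
    (γ : ∀ i j, Path (p i) (p j)) : Prop :=
  ∀ (e : Fin 4 ↪ ι) (s t : I), γ (e 0) (e 1) s ≠ γ (e 2) (e 3) t

/-- The change of the logarithm of `γ i j - p v` along `γ i j`: its imaginary part is the angle by
which the edge `γ i j` turns around the vertex `p v`. -/
noncomputable def turning {ι : Type*} {p : ι → ℂ} (γ : ∀ i j, Path (p i) (p j)) (i j v : ι) : ℂ :=
  logIncrement fun t ↦ γ i j t - p v

theorem turning_add_turning {ι : Type*} {p : ι → ℂ} {γ : ∀ i j, Path (p i) (p j)}
    (hγ : IndependentEdgesDisjoint γ) (e : Fin 4 ↪ ι) :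
    turning γ (e 0) (e 1) (e 2) + turning γ (e 2) (e 3) (e 1) =
      turning γ (e 2) (e 3) (e 0) + turning γ (e 0) (e 1) (e 3) := by
  have hsquare := logIncrement_square (F := fun z ↦ γ (e 0) (e 1) z.1 - γ (e 2) (e 3) z.2)
    (by fun_prop) fun z ↦ sub_ne_zero.2 (hγ e z.1 z.2)
  have hneg (c : ℂ) (hc : ∀ t, γ (e 2) (e 3) t ≠ c) :
      logIncrement (fun t ↦ c - γ (e 2) (e 3) t) = logIncrement fun t ↦ γ (e 2) (e 3) t - c := by
    simpa using logIncrement_neg (f := fun t ↦ γ (e 2) (e 3) t - c) (by fun_prop)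
      fun t ↦ sub_ne_zero.2 (hc t)
  simp only [Path.source, Path.target] at hsquare
  rwa [hneg _ fun t ↦ by simpa using (hγ e 1 t).symm,
    hneg _ fun t ↦ by simpa using (hγ e 0 t).symm] at hsquare

/-- The logarithm of `p i - p j`, normalized so that those of opposite vectors differ by
`Real.pi * Complex.I`, with a sign given by the order of the indices. -/
noncomputable def directionLog {ι : Type*} [LinearOrder ι] (p : ι → ℂ) (i j : ι) : ℂ :=
  if i < j then Complex.log (p i - p j) else Complex.log (p j - p i) + Real.pi * Complex.I

theorem exp_directionLog {ι : Type*} [LinearOrder ι] {p : ι → ℂ} {i j : ι} (h : p i ≠ p j) :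
    Complex.exp (directionLog p i j) = p i - p j := by
  unfold directionLog
  split_ifs
  · exact Complex.exp_log (sub_ne_zero.2 h)
  · rw [Complex.exp_add, Complex.exp_log (sub_ne_zero.2 h.symm), Complex.exp_pi_mul_I]
    ring

theorem directionLog_sub_directionLog {ι : Type*} [LinearOrder ι] (p : ι → ℂ) {i j : ι}
    (h : i ≠ j) :
    directionLog p i j - directionLog p j i =
      ((if i < j then -1 else 1 : ℤ) : ℂ) * (Real.pi * Complex.I) := by
  rcases h.lt_or_gt with h | h <;> simp [directionLog, h, h.not_gt]

theorem exists_turning_eq {ι : Type*} [LinearOrder ι] {p : ι → ℂ} {γ : ∀ i j, Path (p i) (p j)}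
    (hγ : IndependentEdgesDisjoint γ) (e : Fin 4 ↪ ι) :
    ∃ n : ℤ, turning γ (e 0) (e 1) (e 2) =
      directionLog p (e 1) (e 2) - directionLog p (e 0) (e 2) + n * (2 * Real.pi * Complex.I) := by
  have havoid (t : I) : γ (e 0) (e 1) t ≠ p (e 2) := by simpa using hγ e t 0
  have h₀ : p (e 0) ≠ p (e 2) := by simpa using havoid 0
  have h₁ : p (e 1) ≠ p (e 2) := by simpa using havoid 1
  refine Complex.exp_eq_exp_iff_exists_int.1 ?_
  rw [turning, exp_logIncrement (by fun_prop) fun t ↦ sub_ne_zero.2 (havoid t), Complex.exp_sub,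
    exp_directionLog h₀, exp_directionLog h₁, Path.source, Path.target]

theorem not_independentEdgesDisjoint {p : Fin 5 → ℂ} (γ : ∀ i j, Path (p i) (p j)) :
    ¬ IndependentEdgesDisjoint γ := by
  intro hγ
  have hfourth : ∀ i j v : Fin 5, ∃ w, w ≠ i ∧ w ≠ j ∧ w ≠ v := by decide
  have hturning (i j v : Fin 5) : ∃ n : ℤ, i ≠ j → i ≠ v → j ≠ v → turning γ i j v =
      directionLog p j v - directionLog p i v + n * (2 * Real.pi * Complex.I) := by
    obtain ⟨w, hwi, hwj, hwv⟩ := hfourth i j v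
    by_cases h : i ≠ j ∧ i ≠ v ∧ j ≠ v
    · have hinj : Function.Injective ![i, j, v, w] := by
        intro a b
        fin_cases a <;> fin_cases b <;> simp_all [eq_comm]
      obtain ⟨n, hn⟩ := exists_turning_eq hγ ⟨_, hinj⟩
      exact ⟨n, fun _ _ _ ↦ hn⟩
    · exact ⟨0, fun h₁ h₂ h₃ ↦ absurd ⟨h₁, h₂, h₃⟩ h⟩
  choose n hn using hturning
  refine not_forall_two_mul_add_orderSign_eq_zero n fun e ↦ ?_
  have hne {a b : Fin 4} (h : a ≠ b) : e a ≠ e b := e.injective.ne h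
  have hcycle := turning_add_turning hγ e
  rw [hn _ _ _ (hne (by decide)) (hne (by decide)) (hne (by decide)),
    hn _ _ _ (hne (by decide)) (hne (by decide)) (hne (by decide)),
    hn _ _ _ (hne (by decide)) (hne (by decide)) (hne (by decide)),
    hn _ _ _ (hne (by decide)) (hne (by decide)) (hne (by decide))] at hcycle
  have h₁₂ := directionLog_sub_directionLog p (hne (show (1 : Fin 4) ≠ 2 by decide))
  have h₀₂ := directionLog_sub_directionLog p (hne (show (0 : Fin 4) ≠ 2 by decide))
  have h₁₃ := directionLog_sub_directionLog p (hne (show (1 : Fin 4) ≠ 3 by decide))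
  have h₀₃ := directionLog_sub_directionLog p (hne (show (0 : Fin 4) ≠ 3 by decide))
  have hπ : (Real.pi * Complex.I : ℂ) ≠ 0 := by simp [Real.pi_ne_zero]
  apply Int.cast_injective (α := ℂ)
  push_cast at h₁₂ h₀₂ h₁₃ h₀₃ ⊢
  apply mul_right_cancel₀ hπ
  linear_combination hcycle - h₁₂ + h₀₂ + h₁₃ - h₀₃

end PlaneDrawing

section Routes

/-- `v` can be reached from `u` by a walk inside `Q`; in particular `u, v ∈ Q`. -/
def ReachableIn {V : Type*} (G : SimpleGraph V) (Q : Set V) (u v : V) : Prop :=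
  ∃ w : G.Walk u v, ∀ x ∈ w.support, x ∈ Q

namespace ReachableIn

variable {V : Type*} {G : SimpleGraph V} {P Q : Set V} {u v w : V}

theorem refl (hu : u ∈ Q) : ReachableIn G Q u u :=
  ⟨.nil, by simpa using hu⟩

theorem left_mem (h : ReachableIn G Q u v) : u ∈ Q :=
  h.choose_spec _ h.choose.start_mem_support

theorem mono (hPQ : P ⊆ Q) (h : ReachableIn G P u v) : ReachableIn G Q u v :=
  h.imp fun _ hp x hx ↦ hPQ (hp x hx)

theorem symm (h : ReachableIn G Q u v) : ReachableIn G Q v u :=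
  let ⟨p, hp⟩ := h
  ⟨p.reverse, fun x hx ↦ hp x (by simpa using hx)⟩

theorem trans (h₁ : ReachableIn G Q u v) (h₂ : ReachableIn G Q v w) : ReachableIn G Q u w :=
  let ⟨p, hp⟩ := h₁
  let ⟨q, hq⟩ := h₂
  ⟨p.append q, fun x hx ↦ (p.mem_support_append_iff q).1 hx |>.elim (hp x) (hq x)⟩

theorem cons (hadj : G.Adj u v) (h : ReachableIn G Q v w) : ReachableIn G (insert u Q) u w :=
  let ⟨p, hp⟩ := h
  ⟨.cons hadj p, fun x hx ↦ (List.mem_cons.1 hx).imp id (hp x)⟩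

end ReachableIn

/-- Among any routes in `G` between all pairs of vertices of a family indexed by `ι`, there are two
which join disjoint pairs and touch, that is, share a vertex or contain the two ends of an edge. -/
def HasTouchingRoutes (ι : Type*) {V : Type*} (G : SimpleGraph V) : Prop :=
  ∀ (v : ι → V) (Q : ι → ι → Set V), (∀ i j, ReachableIn G (Q i j) (v i) (v j)) →
    ∃ e : Fin 4 ↪ ι, ∃ x ∈ Q (e 0) (e 1), ∃ y ∈ Q (e 2) (e 3), x = y ∨ G.Adj x y

theorem HasTouchingRoutes.nonempty {ι V : Type*} [Nonempty V] {G : SimpleGraph V}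
    (hG : HasTouchingRoutes ι G) : Nonempty ι := by
  obtain ⟨e, -⟩ := hG (fun _ ↦ Classical.arbitrary V) (fun _ _ ↦ Set.univ)
    fun _ _ ↦ .refl (Set.mem_univ _)
  exact ⟨e 0⟩

theorem IsCurve.isPathConnected {c : Set (ℝ × ℝ)} (h : IsCurve c) : IsPathConnected c := by
  obtain ⟨f, hf, rfl⟩ := h
  exact ((convex_Icc (0 : ℝ) 1).isPathConnected ⟨0, by simp⟩).image' hf

theorem ReachableIn.joinedIn {V X : Type*} [TopologicalSpace X] {G : SimpleGraph V}
    {Γ : V → Set X} (hΓ : ∀ v, IsPathConnected (Γ v))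
    (hG : ∀ u v, G.Adj u v → (Γ u ∩ Γ v).Nonempty) {Q : Set V} {u v : V}
    (h : ReachableIn G Q u v) {x y : X} (hx : x ∈ Γ u) (hy : y ∈ Γ v) :
    JoinedIn (⋃ q ∈ Q, Γ q) x y := by
  have hsub {q : V} (hq : q ∈ Q) : Γ q ⊆ ⋃ q ∈ Q, Γ q := Set.subset_biUnion_of_mem hq
  obtain ⟨p, hp⟩ := h
  induction p generalizing x with
  | nil => exact ((hΓ _).joinedIn x hx y hy).mono (hsub (hp _ (by simp)))
  | cons hadj p ih =>
    obtain ⟨z, hzu, hzv⟩ := hG _ _ hadj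
    exact (((hΓ _).joinedIn x hx z hzu).mono (hsub (hp _ (by simp)))).trans
      (ih hzv hy fun q hq ↦ hp q (by simp [hq]))

theorem IsStringGraph.hasTouchingRoutes {V : Type*} {G : SimpleGraph V} (hG : IsStringGraph G) :
    HasTouchingRoutes (Fin 5) G := by
  obtain ⟨Γ, hcurve, hadj⟩ := hG
  have hΓ (v : V) : IsPathConnected (Γ v) := (hcurve v).isPathConnected
  intro v Q hQ
  choose x hx using fun i ↦ (hΓ (v i)).nonempty
  have hjoined (i j : Fin 5) : JoinedIn (⋃ q ∈ Q i j, Γ q) (x i) (x j) :=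
    (hQ i j).joinedIn hΓ (fun u v h ↦ (hadj u v h.ne).1 h) (hx i) (hx j)
  let φ := Complex.equivRealProdCLM.symm
  obtain ⟨e, s, t, hst⟩ : ∃ (e : Fin 4 ↪ Fin 5) (s t : I),
      φ ((hjoined (e 0) (e 1)).somePath s) = φ ((hjoined (e 2) (e 3)).somePath t) := by
    have hK₅ := not_independentEdgesDisjoint fun i j ↦ (hjoined i j).somePath.map φ.continuous
    simp only [IndependentEdgesDisjoint, not_forall, not_not] at hK₅
    exact hK₅
  obtain ⟨q, hq, hsq⟩ := Set.mem_iUnion₂.1 ((hjoined (e 0) (e 1)).somePath_mem s)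
  obtain ⟨r, hr, htr⟩ := Set.mem_iUnion₂.1 ((hjoined (e 2) (e 3)).somePath_mem t)
  refine ⟨e, q, hq, r, hr, or_iff_not_imp_left.2 fun hne ↦ (hadj q r hne).2 ⟨_, hsq, ?_⟩⟩
  rwa [φ.injective hst]

end Routes

section BallGrowing

variable {V : Type*} {G : SimpleGraph V} {w : V → ℕ} {T : Finset V} {c v : V} {r t : ℕ}

open Classical in
/-- The vertices of `T` which can reach `c` inside a subset of `T` of total weight at most `r`: the
ball of radius `r` around `c` in the induced graph on `T`, for the vertex weights `w`. -/
noncomputable def weightedBall (G : SimpleGraph V) (w : V → ℕ) (T : Finset V) (c : V) (r : ℕ) :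
    Finset V :=
  {v ∈ T | ∃ Q ⊆ T, ReachableIn G Q v c ∧ ∑ x ∈ Q, w x ≤ r}

open Classical in
/-- The vertices of `T` whose own weight makes the difference between lying inside and outside
`weightedBall G w T c r`. They separate this ball from the rest of `T`. -/
noncomputable def weightedShell (G : SimpleGraph V) (w : V → ℕ) (T : Finset V) (c : V) (r : ℕ) :
    Finset V :=
  {v ∈ T | v ∉ weightedBall G w T c r ∧ v ∈ weightedBall G w T c (r + w v)}

theorem mem_weightedBall : v ∈ weightedBall G w T c r ↔
    v ∈ T ∧ ∃ Q ⊆ T, ReachableIn G Q v c ∧ ∑ x ∈ Q, w x ≤ r := by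
  simp [weightedBall]

theorem mem_weightedShell : v ∈ weightedShell G w T c r ↔
    v ∉ weightedBall G w T c r ∧ v ∈ weightedBall G w T c (r + w v) := by
  simp +contextual [weightedShell, mem_weightedBall]

theorem weightedBall_subset : weightedBall G w T c r ⊆ T := fun _ h ↦ (mem_weightedBall.1 h).1

theorem weightedShell_subset : weightedShell G w T c r ⊆ T := fun _ h ↦
  weightedBall_subset (mem_weightedShell.1 h).2

theorem weightedBall_mono (htr : t ≤ r) : weightedBall G w T c t ⊆ weightedBall G w T c r := by
  intro v hv
  obtain ⟨hvT, Q, hQT, hQ, hQw⟩ := mem_weightedBall.1 hv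
  exact mem_weightedBall.2 ⟨hvT, Q, hQT, hQ, hQw.trans htr⟩

theorem disjoint_weightedBall_weightedShell :
    Disjoint (weightedBall G w T c r) (weightedShell G w T c r) :=
  disjoint_left.2 fun _ hball hshell ↦ (mem_weightedShell.1 hshell).1 hball

theorem center_mem_weightedShell_zero (hc : c ∈ T) (hw : 0 < w c) :
    c ∈ weightedShell G w T c 0 := by
  refine mem_weightedShell.2 ⟨fun h ↦ ?_, mem_weightedBall.2
    ⟨hc, {c}, by simpa using hc, .refl (by simp), by simp⟩⟩
  obtain ⟨-, Q, -, hQ, hQw⟩ := mem_weightedBall.1 h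
  exact hw.not_ge ((single_le_sum (fun _ _ ↦ Nat.zero_le _) hQ.left_mem).trans hQw)

theorem lt_add_of_mem_weightedShell (ht : v ∈ weightedShell G w T c t)
    (hr : v ∈ weightedShell G w T c r) : r < t + w v :=
  not_le.1 fun h ↦ (mem_weightedShell.1 hr).1 (weightedBall_mono h (mem_weightedShell.1 ht).2)

variable [DecidableEq V]

theorem weightedShell_subset_union (htr : t ≤ r) :
    weightedShell G w T c t ⊆ weightedBall G w T c r ∪ weightedShell G w T c r := by
  intro v hv
  by_cases hball : v ∈ weightedBall G w T c r
  · exact mem_union_left _ hball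
  · exact mem_union_right _ (mem_weightedShell.2
      ⟨hball, weightedBall_mono (by lia) (mem_weightedShell.1 hv).2⟩)

theorem mem_union_weightedShell_of_adj {u : V} (hu : u ∈ weightedBall G w T c r) (hv : v ∈ T)
    (hadj : G.Adj u v) : v ∈ weightedBall G w T c r ∪ weightedShell G w T c r := by
  obtain ⟨-, Q, hQT, hQ, hQw⟩ := mem_weightedBall.1 hu
  by_cases hball : v ∈ weightedBall G w T c r
  · exact mem_union_left _ hball
  refine mem_union_right _ (mem_weightedShell.2 ⟨hball, mem_weightedBall.2
    ⟨hv, insert v Q, insert_subset hv hQT, by simpa using hQ.cons hadj.symm, ?_⟩⟩)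
  by_cases hvQ : v ∈ Q
  · rw [insert_eq_of_mem hvQ]
    lia
  · rw [sum_insert hvQ]
    lia

theorem card_filter_mem_weightedShell_le (R : Finset ℕ) :
    #{t ∈ R | v ∈ weightedShell G w T c t} ≤ w v := by
  rcases eq_empty_or_nonempty {t ∈ R | v ∈ weightedShell G w T c t} with hR | hR
  · simp [hR]
  · have hmin := (mem_filter.1 (min'_mem _ hR)).2
    calc #{t ∈ R | v ∈ weightedShell G w T c t}
        ≤ #(Ico (min' _ hR) (min' _ hR + w v)) := card_le_card fun t ht ↦
          mem_Ico.2 ⟨min'_le _ _ ht, lt_add_of_mem_weightedShell hmin (mem_filter.1 ht).2⟩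
      _ = w v := by simp

theorem sum_card_weightedShell_le (r : ℕ) : ∑ t ∈ range r, #(weightedShell G w T c t) ≤
    ∑ v ∈ weightedBall G w T c r ∪ weightedShell G w T c r, w v := by
  set U := weightedBall G w T c r ∪ weightedShell G w T c r
  calc ∑ t ∈ range r, #(weightedShell G w T c t)
      = ∑ t ∈ range r, #{v ∈ U | v ∈ weightedShell G w T c t} := by
        refine sum_congr rfl fun t ht ↦ ?_
        rw [filter_mem_eq_inter, inter_eq_right.2
          (weightedShell_subset_union (mem_range.1 ht).le)]
    _ = ∑ v ∈ U, #{t ∈ range r | v ∈ weightedShell G w T c t} :=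
        sum_card_bipartiteAbove_eq_sum_card_bipartiteBelow fun t v ↦ v ∈ weightedShell G w T c t
    _ ≤ ∑ v ∈ U, w v := sum_le_sum fun v _ ↦ card_filter_mem_weightedShell_le _

theorem one_add_pow_le_sum_range {a : ℕ → ℝ} {ε : ℝ} (hε : 0 ≤ 1 + ε) (h₀ : 1 ≤ a 0) {R : ℕ}
    (ha : ∀ r ≤ R, ε * ∑ t ∈ range r, a t ≤ a r) : (1 + ε) ^ R ≤ ∑ t ∈ range (R + 1), a t := by
  induction R with
  | zero => simpa using h₀
  | succ R ih =>
    calc (1 + ε) ^ (R + 1) = (1 + ε) * (1 + ε) ^ R := pow_succ' _ _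
      _ ≤ (1 + ε) * ∑ t ∈ range (R + 1), a t :=
        mul_le_mul_of_nonneg_left (ih fun r hr ↦ ha r (by lia)) hε
      _ ≤ ∑ t ∈ range (R + 1 + 1), a t := by
        rw [sum_range_succ _ (R + 1)]
        linarith [ha (R + 1) le_rfl]

theorem exists_card_weightedShell_le {ε : ℝ} (hε : 0 ≤ ε) (hc : c ∈ T) (hw : 0 < w c) {R : ℕ}
    (hR : ∑ v ∈ T, (w v : ℝ) < (1 + ε) ^ R) :
    ∃ r ≤ R, (#(weightedShell G w T c r) : ℝ) ≤
      ε * ∑ v ∈ weightedBall G w T c r ∪ weightedShell G w T c r, (w v : ℝ) := by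
  by_contra! hlarge
  have hsum (r : ℕ) : ∑ t ∈ range r, (#(weightedShell G w T c t) : ℝ) ≤
      ∑ v ∈ weightedBall G w T c r ∪ weightedShell G w T c r, (w v : ℝ) :=
    mod_cast sum_card_weightedShell_le r
  have hgrowth := one_add_pow_le_sum_range (a := fun t ↦ #(weightedShell G w T c t))
    (by positivity) (mod_cast card_pos.2 ⟨c, center_mem_weightedShell_zero hc hw⟩)
    fun r hr ↦ (mul_le_mul_of_nonneg_left (hsum r) hε).trans (hlarge r hr).le
  exact ((hR.trans_le hgrowth).trans_le (hsum _)).not_ge (sum_le_sum_of_subset_of_nonneg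
    (union_subset weightedBall_subset weightedShell_subset) fun _ _ _ ↦ by positivity)

end BallGrowing

section Clusters

variable {V : Type*} {G : SimpleGraph V}

/-- `S` separates `A` from the rest of `T` in the induced graph on `T`, and its size is at most `ε`
times the weight of `A ∪ S`. -/
structure IsSparseCut [DecidableEq V] (G : SimpleGraph V) (w : V → ℕ) (ε : ℝ) (T A S : Finset V) :
    Prop where
  union_subset : A ∪ S ⊆ T
  disjoint : Disjoint A S
  mem_union_of_adj : ∀ u ∈ A, ∀ v ∈ T, G.Adj u v → v ∈ A ∪ S
  card_le : (#S : ℝ) ≤ ε * ∑ v ∈ A ∪ S, (w v : ℝ)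

theorem IsSparseCut.union [DecidableEq V] {w : V → ℕ} {ε : ℝ} {T A B S S' : Finset V}
    (h : IsSparseCut G w ε T A S) (h' : IsSparseCut G w ε (T \ (A ∪ S)) B S') :
    IsSparseCut G w ε T (A ∪ B) (S ∪ S') := by
  have hunion : A ∪ B ∪ (S ∪ S') = (A ∪ S) ∪ (B ∪ S') := union_union_union_comm ..
  have hdisj : Disjoint (A ∪ S) (B ∪ S') := disjoint_of_subset_right h'.union_subset disjoint_sdiff
  refine ⟨?_, ?_, fun u hu v hv hadj ↦ ?_, ?_⟩
  · rw [hunion]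
    exact Finset.union_subset h.union_subset (h'.union_subset.trans sdiff_subset)
  · simp only [disjoint_union_left, disjoint_union_right] at hdisj ⊢
    exact ⟨⟨h.disjoint, hdisj.1.2.symm⟩, hdisj.2.1, h'.disjoint⟩
  · rw [hunion]
    by_cases hvAS : v ∈ A ∪ S
    · exact mem_union_left _ hvAS
    rcases mem_union.1 hu with hu | hu
    · exact absurd (h.mem_union_of_adj u hu v hv hadj) hvAS
    · exact mem_union_right _ (h'.mem_union_of_adj u hu v (mem_sdiff.2 ⟨hv, hvAS⟩) hadj)
  · rw [hunion, sum_union hdisj, mul_add]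
    calc (#(S ∪ S') : ℝ) ≤ #S + #S' := mod_cast card_union_le S S'
      _ ≤ _ := add_le_add h.card_le h'.card_le

theorem IsSparseCut.card_le_mul_sum [Fintype V] [DecidableEq V] {w : V → ℕ} {ε : ℝ} (hε : 0 ≤ ε)
    {T A S : Finset V} (h : IsSparseCut G w ε T A S) : (#S : ℝ) ≤ ε * ∑ v, (w v : ℝ) := by
  refine h.card_le.trans (mul_le_mul_of_nonneg_left ?_ hε)
  exact sum_le_sum_of_subset_of_nonneg (subset_univ _) fun _ _ _ ↦ by positivity

theorem exists_isSparseCut_radius_le [DecidableEq V] {w : V → ℕ} {ε : ℝ} (hε : 0 ≤ ε)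
    {T : Finset V} {c : V} (hc : c ∈ T) (hw : 0 < w c) {R : ℕ}
    (hR : ∑ v ∈ T, (w v : ℝ) < (1 + ε) ^ R) :
    ∃ A S, IsSparseCut G w ε T A S ∧ c ∈ A ∪ S ∧
      ∀ u ∈ A, ∃ Q : Finset V, ReachableIn G Q u c ∧ ∑ x ∈ Q, w x ≤ R := by
  obtain ⟨r, hr, hcard⟩ := exists_card_weightedShell_le (G := G) hε hc hw hR
  refine ⟨weightedBall G w T c r, weightedShell G w T c r,
    ⟨union_subset weightedBall_subset weightedShell_subset, disjoint_weightedBall_weightedShell,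
      fun u hu v hv ↦ mem_union_weightedShell_of_adj hu hv, hcard⟩,
    weightedShell_subset_union r.zero_le (center_mem_weightedShell_zero hc hw), fun u hu ↦ ?_⟩
  obtain ⟨-, Q, -, hQ, hQw⟩ := mem_weightedBall.1 hu
  exact ⟨Q, hQ, hQw.trans hr⟩

variable [Fintype V]

theorem isSeparator_of_mem_union_of_adj [DecidableEq V] {A S : Finset V} (hdisj : Disjoint A S)
    (hadj : ∀ u ∈ A, ∀ v, G.Adj u v → v ∈ A ∪ S) (hA : (#A : ℝ) ≤ 2 / 3 * Fintype.card V)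
    (hAS : 1 / 3 * Fintype.card V ≤ (#(A ∪ S) : ℝ)) : IsSeparator G S := by
  refine ⟨A, (A ∪ S)ᶜ, ?_, hdisj.symm, ?_, ?_, hA, ?_, fun u hu v hv h ↦
    mem_compl.1 hv (hadj u hu v h)⟩
  · rw [union_comm S A, union_compl]
  · exact disjoint_compl_right.mono_left subset_union_right
  · exact disjoint_compl_right.mono_left subset_union_left
  · have hcard : (#(A ∪ S) : ℝ) + #(A ∪ S)ᶜ = Fintype.card V := mod_cast card_add_card_compl _
    linarith

theorem IsSparseCut.isSeparator [DecidableEq V] {w : V → ℕ} {ε : ℝ} {A S : Finset V}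
    (h : IsSparseCut G w ε univ A S) (hA : (#A : ℝ) ≤ 2 / 3 * Fintype.card V)
    (hAS : 1 / 3 * Fintype.card V ≤ (#(A ∪ S) : ℝ)) : IsSeparator G S :=
  isSeparator_of_mem_union_of_adj h.disjoint
    (fun u hu v ↦ h.mem_union_of_adj u hu v (mem_univ v)) hA hAS

theorem IsSparseCut.isSeparator_union [DecidableEq V] {w : V → ℕ} {ε : ℝ} {A B S S' : Finset V}
    (h : IsSparseCut G w ε univ A S) (h' : IsSparseCut G w ε (univ \ (A ∪ S)) B S')
    (hAS : (#(A ∪ S) : ℝ) < 1 / 3 * Fintype.card V) (hB : (#B : ℝ) ≤ 2 / 3 * Fintype.card V)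
    (hAB : 2 / 3 * Fintype.card V < (#(A ∪ B) : ℝ)) : IsSeparator G (S ∪ S') := by
  refine isSeparator_of_mem_union_of_adj
    (disjoint_of_subset_left subset_union_right (h.union h').disjoint)
    (fun u hu v hadj ↦ ?_) hB ?_
  · have hv := (h.union h').mem_union_of_adj u (mem_union_right _ hu) v (mem_univ v) hadj
    have hvA : v ∉ A := fun hvA ↦ (mem_sdiff.1 (h'.union_subset (mem_union_left _ hu))).2
      (h.mem_union_of_adj v hvA u (mem_univ u) hadj.symm)
    simpa [hvA] using hv
  · have hcardAB : (#(A ∪ B) : ℝ) ≤ #A + #B := mod_cast card_union_le A B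
    have hcardA : (#A : ℝ) ≤ #(A ∪ S) := mod_cast card_le_card subset_union_left
    have hcardB : (#B : ℝ) ≤ #(B ∪ (S ∪ S')) := mod_cast card_le_card subset_union_left
    linarith

/-- A set of more than two thirds of the vertices, with a route from each of them to a common
center; `route u` is relevant only for members `u`. -/
structure Cluster (G : SimpleGraph V) where
  center : V
  members : Finset V
  route : V → Finset V
  two_thirds_lt_card : 2 / 3 * (Fintype.card V : ℝ) < #members
  reachable : ∀ u ∈ members, ReachableIn G (route u) u center

instance : Finite (Cluster G) := by
  refine Finite.of_injective (fun K : Cluster G ↦ (K.center, K.members, K.route)) ?_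
  rintro ⟨⟩ ⟨⟩ h
  simpa using h

theorem exists_maximal_isSparseCut [DecidableEq V] (G : SimpleGraph V) (w : V → ℕ) (ε : ℝ) :
    ∃ A S, IsSparseCut G w ε univ A S ∧ (#A : ℝ) ≤ 2 / 3 * Fintype.card V ∧
      ∀ A' S', IsSparseCut G w ε univ A' S' → #(A ∪ S) < #(A' ∪ S') →
        2 / 3 * (Fintype.card V : ℝ) < #A' := by
  obtain ⟨⟨A, S⟩, ⟨hcut, hA⟩, hmax⟩ := Set.exists_max_image
    {p : Finset V × Finset V | IsSparseCut G w ε univ p.1 p.2 ∧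
      (#p.1 : ℝ) ≤ 2 / 3 * Fintype.card V}
    (fun p ↦ #(p.1 ∪ p.2)) (Set.toFinite _)
    ⟨(∅, ∅), ⟨by simp, by simp, by simp, by simp⟩, by simp⟩
  exact ⟨A, S, hcut, hA, fun A' S' hcut' hlt ↦ not_le.1 fun hA' ↦
    (hmax (A', S') ⟨hcut', hA'⟩).not_gt hlt⟩

/-- Cutting off balls one after the other either finds a cluster or produces a separator: the cut
vertices removed so far are few, and when the pieces cut off first exceed two thirds of the
vertices, the last piece is the inside of a balanced separation. -/
theorem exists_cluster [DecidableEq V] {w : V → ℕ} (hw : ∀ v, 0 < w v) {ε : ℝ} (hε : 0 ≤ ε) {R : ℕ}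
    (hR : ∑ v, (w v : ℝ) < (1 + ε) ^ R)
    (hsep : ∀ S, IsSeparator G S → ε * ∑ v, (w v : ℝ) < #S) :
    ∃ K : Cluster G, ∀ u ∈ K.members, ∑ x ∈ K.route u, w x ≤ R := by
  obtain ⟨A, S, hcut, hA, hmax⟩ := exists_maximal_isSparseCut G w ε
  have hAS : (#(A ∪ S) : ℝ) < 1 / 3 * Fintype.card V := not_le.1 fun h ↦
    (hsep S (hcut.isSeparator hA h)).not_ge (hcut.card_le_mul_sum hε)
  obtain ⟨c, hc⟩ : ∃ c, c ∉ A ∪ S := by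
    by_contra! h
    rw [eq_univ_of_forall h, card_univ] at hAS
    linarith [(Fintype.card V).cast_nonneg (α := ℝ)]
  obtain ⟨B, S', hcut', hcB, hroute⟩ := exists_isSparseCut_radius_le (G := G) (w := w)
    (T := univ \ (A ∪ S)) hε (by simpa using hc) (hw c)
    (hR.trans_le' (sum_le_sum_of_subset_of_nonneg (subset_univ _) fun _ _ _ ↦ by positivity))
  have hAB : 2 / 3 * (Fintype.card V : ℝ) < #(A ∪ B) := by
    refine hmax _ _ (hcut.union hcut') (card_lt_card ?_)
    rw [union_union_union_comm]
    exact ⟨subset_union_left, fun h ↦ hc (h (mem_union_right _ hcB))⟩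
  choose! route hreach hrouteR using hroute
  exact ⟨⟨c, B, route, not_le.1 fun hB ↦ (hsep _ (hcut.isSeparator_union hcut' hAS hB hAB)).not_ge
    ((hcut.union hcut').card_le_mul_sum hε), hreach⟩, hrouteR⟩

theorem exists_lt_one_add_pow {ε : ℝ} (hε : 0 < ε) (hε₁ : ε ≤ 1) (N : ℕ) :
    ∃ R : ℕ, (N : ℝ) < (1 + ε) ^ R ∧ R ≤ 2 / ε * (Nat.log 2 N + 1) := by
  have hceil : (⌈1 / ε⌉₊ : ℝ) ≤ 2 / ε := by
    have h₁ := (Nat.ceil_lt_add_one (a := 1 / ε) (by positivity)).le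
    have h₂ := (one_le_div hε).2 hε₁
    linarith [add_div 1 1 ε, one_add_one_eq_two (R := ℝ) ▸ add_div 1 1 ε]
  have htwo : (2 : ℝ) ≤ (1 + ε) ^ ⌈1 / ε⌉₊ := by
    have h := (div_le_iff₀ hε).1 (Nat.le_ceil (1 / ε))
    linarith [one_add_mul_le_pow (by linarith : (-2 : ℝ) ≤ ε) ⌈1 / ε⌉₊]
  refine ⟨⌈1 / ε⌉₊ * (Nat.log 2 N + 1), ?_, ?_⟩
  · calc (N : ℝ) < 2 ^ (Nat.log 2 N + 1) := mod_cast Nat.lt_pow_succ_log_self one_lt_two N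
      _ ≤ ((1 + ε) ^ ⌈1 / ε⌉₊) ^ (Nat.log 2 N + 1) := by gcongr
      _ = (1 + ε) ^ (⌈1 / ε⌉₊ * (Nat.log 2 N + 1)) := (pow_mul ..).symm
  · push_cast
    gcongr

/-- The integer weights `⌊n * s v⌋₊ + 1` have total weight at most `2 * n`, so that
`ε = k / (2 * n)` limits the size of sparse cuts by `k`. -/
theorem exists_cluster_sum_route_le [DecidableEq V] {s : V → ℝ} (hs : s ∈ stdSimplex ℝ V) {k : ℝ}
    (hk : 0 < k) (hkn : k ≤ Fintype.card V) (hsep : ∀ S, IsSeparator G S → k < #S) :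
    ∃ K : Cluster G, ∀ u ∈ K.members, ∑ x ∈ K.route u, s x ≤
      4 * (Nat.log 2 (2 * Fintype.card V) + 1) / k := by
  set n := Fintype.card V
  have hn : (0 : ℝ) < n := hk.trans_le hkn
  let w (v : V) : ℕ := ⌊n * s v⌋₊ + 1
  have hw (v : V) : n * s v ≤ w v := by simpa [w] using (Nat.lt_floor_add_one (n * s v)).le
  have hsum : ∑ v, (w v : ℝ) ≤ 2 * n :=
    calc ∑ v, (w v : ℝ) ≤ ∑ v, (n * s v + 1) := sum_le_sum fun v _ ↦ by
          simpa [w] using Nat.floor_le (mul_nonneg hn.le (hs.1 v))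
      _ = 2 * n := by
          rw [sum_add_distrib, ← mul_sum, hs.2]
          simp only [sum_const, card_univ, nsmul_eq_mul]
          ring
  obtain ⟨R, hR, hRle⟩ := exists_lt_one_add_pow (ε := k / (2 * n)) (by positivity)
    ((div_le_one (by positivity)).2 (by linarith)) (2 * n)
  have hεk : k / (2 * n) * ∑ v, (w v : ℝ) ≤ k := by
    rw [div_mul_eq_mul_div, div_le_iff₀ (by positivity)]
    exact mul_le_mul_of_nonneg_left hsum hk.le
  obtain ⟨K, hK⟩ := exists_cluster (G := G) (fun v ↦ Nat.succ_pos _) (by positivity)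
    (hsum.trans_lt (mod_cast hR)) fun S hS ↦ hεk.trans_lt (hsep S hS)
  refine ⟨K, fun u hu ↦ le_of_mul_le_mul_left ?_ hn⟩
  calc n * ∑ x ∈ K.route u, s x ≤ ∑ x ∈ K.route u, (w x : ℝ) := by
        rw [mul_sum]
        exact sum_le_sum fun x _ ↦ hw x
    _ ≤ R := mod_cast hK u hu
    _ ≤ 2 / (k / (2 * n)) * (Nat.log 2 (2 * n) + 1) := hRle
    _ = n * (4 * (Nat.log 2 (2 * n) + 1) / k) := by
        field_simp
        ring

end Clusters

section Minimax

open Matrix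

/-- Von Neumann's minimax theorem, where `A b x` is the loss of the answer `b` to `x`. -/
theorem exists_mem_stdSimplex_vecMul_le {α β : Type*} [Fintype α] [Nonempty α] [Fintype β]
    (A : Matrix β α ℝ) {t : ℝ} (h : ∀ s ∈ stdSimplex ℝ α, ∃ b, (A *ᵥ s) b ≤ t) :
    ∃ μ ∈ stdSimplex ℝ β, ∀ x, (μ ᵥ* A) x ≤ t := by
  classical
  have hα : (stdSimplex ℝ α).Nonempty := ⟨_, single_mem_stdSimplex ℝ (Classical.arbitrary α)⟩
  have hβ : (stdSimplex ℝ β).Nonempty := ⟨_, single_mem_stdSimplex ℝ (h _ hα.some_mem).choose⟩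
  let f : (β → ℝ) →ₗ[ℝ] (α → ℝ) →ₗ[ℝ] ℝ := toLinearMap₂' ℝ A
  have hf (μ : β → ℝ) (s : α → ℝ) : f μ s = μ ⬝ᵥ A *ᵥ s := toLinearMap₂'_apply' A μ s
  obtain ⟨μ, hμ, s, hs, hsaddle⟩ := Sion.exists_isSaddlePointOn (f := fun μ s ↦ f μ s)
    hβ (convex_stdSimplex ℝ β) (isCompact_stdSimplex ℝ β)
    (fun s _ ↦
      (f.flip s).continuous_of_finiteDimensional.lowerSemicontinuous.lowerSemicontinuousOn _)
    (fun s _ ↦ ((f.flip s).convexOn (convex_stdSimplex ℝ β)).quasiconvexOn)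
    (convex_stdSimplex ℝ α) hα (isCompact_stdSimplex ℝ α)
    (fun μ _ ↦
      (f μ).continuous_of_finiteDimensional.upperSemicontinuous.upperSemicontinuousOn _)
    (fun μ _ ↦ ((f μ).concaveOn (convex_stdSimplex ℝ α)).quasiconcaveOn)
  obtain ⟨b, hb⟩ := h s hs
  refine ⟨μ, hμ, fun x ↦ ?_⟩
  calc (μ ᵥ* A) x = f μ (Pi.single x 1) := by rw [hf, dotProduct_mulVec, dotProduct_single_one]
    _ ≤ f (Pi.single b 1) s := hsaddle _ (single_mem_stdSimplex ℝ b) _ (single_mem_stdSimplex ℝ x)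
    _ ≤ t := by rwa [hf, single_one_dotProduct]

end Minimax

section Marginals

/-- Independent random variables: the joint law of a subfamily is the product of its laws. -/
theorem sum_prod_mul_comp_embedding {ι κ β R : Type*} [Fintype ι] [Fintype κ] [Fintype β]
    [DecidableEq ι] [DecidableEq κ] [CommSemiring R] {p : ι → β → R} (hp : ∀ i, ∑ b, p i b = 1)
    (e : κ ↪ ι) (F : (κ → β) → R) :
    ∑ ω : ι → β, (∏ i, p i (ω i)) * F (ω ∘ e) = ∑ η : κ → β, (∏ k, p (e k) (η k)) * F η := by
  classical
  rw [← sum_fiberwise univ fun ω : ι → β ↦ ω ∘ e]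
  refine sum_congr rfl fun η _ ↦ ?_
  let B (i : ι) : Finset β := {b | ∀ k, e k = i → b = η k}
  have hfiber : ({ω | ω ∘ e = η} : Finset (ι → β)) = Fintype.piFinset B := by
    ext ω
    simp only [mem_filter_univ, Fintype.mem_piFinset, B, funext_iff, Function.comp_apply]
    exact ⟨fun h i k hk ↦ hk ▸ h k, fun h k ↦ h _ k rfl⟩
  calc ∑ ω with ω ∘ e = η, (∏ i, p i (ω i)) * F (ω ∘ e)
      = (∑ ω with ω ∘ e = η, ∏ i, p i (ω i)) * F η := by
        rw [sum_mul]
        exact sum_congr rfl fun ω hω ↦ by rw [(mem_filter.1 hω).2]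
    _ = (∏ i, ∑ b ∈ B i, p i b) * F η := by rw [hfiber, prod_univ_sum]
    _ = (∏ k, p (e k) (η k)) * F η := by
        congr 1
        refine (Fintype.prod_of_injective e e.injective _ _ (fun i hi ↦ ?_) fun k ↦ ?_).symm
        · have hB : B i = univ := filter_true_of_mem fun b _ k hk ↦ absurd ⟨k, hk⟩ hi
          rw [hB, hp]
        · have hB : B (e k) = {η k} := by
            ext b
            simp [B]
          rw [hB, sum_singleton]

theorem sum_prod_mul_pair {ι β R : Type*} [Fintype ι] [DecidableEq ι] [Fintype β] [CommSemiring R]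
    {p : ι → β → R} (hp : ∀ i, ∑ b, p i b = 1) {i j : ι} (hij : i ≠ j) (F : β → β → R) :
    ∑ ω : ι → β, (∏ i, p i (ω i)) * F (ω i) (ω j) = ∑ b, ∑ c, p i b * p j c * F b c := by
  have hinj : Function.Injective ![i, j] := by
    intro a b
    fin_cases a <;> fin_cases b <;> simp [hij, hij.symm]
  have h := sum_prod_mul_comp_embedding hp ⟨_, hinj⟩ fun η ↦ F (η 0) (η 1)
  rw [← (finTwoArrowEquiv β).symm.sum_comp, Fintype.sum_prod_type] at h
  simpa using h

theorem expect_comp_embedding {ι κ β R : Type*} [Fintype ι] [Fintype κ] [Fintype β]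
    [DecidableEq ι] [DecidableEq κ] [Nonempty β] [Semifield R] [CharZero R] (e : κ ↪ ι)
    (F : (κ → β) → R) :
    𝔼 v : ι → β, F (v ∘ e) = 𝔼 η : κ → β, F η := by
  have h := sum_prod_mul_comp_embedding (p := fun _ _ ↦ (Fintype.card β : R)⁻¹) (by simp) e F
  simpa [← mul_sum, Fintype.expect_eq_sum_div_card, div_eq_inv_mul] using h

theorem sum_fin_four {β M : Type*} [Fintype β] [AddCommMonoid M] (F : (Fin 4 → β) → M) :
    ∑ η, F η = ∑ i, ∑ j, ∑ k, ∑ l, F ![i, j, k, l] := by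
  rw [← (Fin.appendEquiv 2 2).sum_comp, Fintype.sum_prod_type,
    ← (finTwoArrowEquiv β).symm.sum_comp, Fintype.sum_prod_type]
  refine sum_congr rfl fun i _ ↦ sum_congr rfl fun j _ ↦ ?_
  rw [← (finTwoArrowEquiv β).symm.sum_comp, Fintype.sum_prod_type]
  refine sum_congr rfl fun k _ ↦ sum_congr rfl fun l _ ↦ congrArg F ?_
  ext a
  fin_cases a <;> rfl

end Marginals

section RandomRouting

variable {V α β ι : Type*} [Fintype β] {G : SimpleGraph V}

/-- A random route, out of finitely many, for each pair of terminals. The routes of probability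
zero are irrelevant. -/
structure RandomRouting (G : SimpleGraph V) (α β : Type*) [Fintype β] where
  terminal : α → V
  prob : α → α → β → ℝ
  route : α → α → β → Finset V
  prob_mem : ∀ i j, prob i j ∈ stdSimplex ℝ β
  reachable : ∀ i j b, prob i j b ≠ 0 → ReachableIn G (route i j b) (terminal i) (terminal j)

/-- The ordered pairs of equal or adjacent vertices. -/
def touchingPairs [Fintype V] [DecidableEq V] (G : SimpleGraph V) [DecidableRel G.Adj] :
    Finset (Σ _ : V, V) :=
  univ.sigma fun x ↦ insert x (G.neighborFinset x)

theorem mem_touchingPairs [Fintype V] [DecidableEq V] [DecidableRel G.Adj] {z : Σ _ : V, V} :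
    z ∈ touchingPairs G ↔ z.1 = z.2 ∨ G.Adj z.1 z.2 := by
  simp [touchingPairs, eq_comm]

theorem card_touchingPairs [Fintype V] [DecidableEq V] [DecidableRel G.Adj] :
    #(touchingPairs G) = Fintype.card V + 2 * #G.edgeFinset := by
  simp [touchingPairs, sum_add_distrib, ← G.sum_degrees_eq_twice_card_edges, add_comm]

namespace RandomRouting

variable [DecidableEq V] (𝓡 : RandomRouting G α β)

/-- The probability that the route from `i` to `j` visits `x`. -/
def visitProb (i j : α) (x : V) : ℝ :=
  ∑ b, 𝓡.prob i j b * if x ∈ 𝓡.route i j b then 1 else 0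

/-- The expected number of routes visiting `x`. -/
def congestion [Fintype α] (x : V) : ℝ :=
  ∑ i, ∑ j, 𝓡.visitProb i j x

theorem visitProb_nonneg {𝓡 : RandomRouting G α β} (i j : α) (x : V) : 0 ≤ 𝓡.visitProb i j x :=
  sum_nonneg fun b _ ↦ mul_nonneg ((𝓡.prob_mem i j).1 b) (by positivity)

theorem congestion_nonneg [Fintype α] {𝓡 : RandomRouting G α β} (x : V) : 0 ≤ 𝓡.congestion x :=
  sum_nonneg fun i _ ↦ sum_nonneg fun j _ ↦ visitProb_nonneg i j x

variable [Fintype V] [DecidableRel G.Adj]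

/-- The expected number of contacts between independent routes from `i` to `j` and from `k`
to `l`. -/
def contacts (i j k l : α) : ℝ :=
  ∑ z ∈ touchingPairs G, 𝓡.visitProb i j z.1 * 𝓡.visitProb k l z.2

variable {𝓡}

theorem contacts_nonneg (i j k l : α) : 0 ≤ 𝓡.contacts i j k l :=
  sum_nonneg fun _ _ ↦ mul_nonneg (visitProb_nonneg ..) (visitProb_nonneg ..)

theorem contacts_eq_sum_prob (i j k l : α) : 𝓡.contacts i j k l =
    ∑ b, ∑ c, 𝓡.prob i j b * 𝓡.prob k l c *
      #{z ∈ touchingPairs G | z.1 ∈ 𝓡.route i j b ∧ z.2 ∈ 𝓡.route k l c} := by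
  simp only [contacts, visitProb, sum_mul_sum]
  rw [sum_comm]
  refine sum_congr rfl fun b _ ↦ ?_
  rw [sum_comm]
  refine sum_congr rfl fun c _ ↦ ?_
  rw [natCast_card_filter, mul_sum]
  refine sum_congr rfl fun z _ ↦ ?_
  rw [mul_mul_mul_comm, ite_zero_mul_ite_zero, one_mul]

theorem one_le_sum_contacts [Fintype ι] (hG : HasTouchingRoutes ι G) (v : ι → α) :
    1 ≤ ∑ e : Fin 4 ↪ ι, 𝓡.contacts (v (e 0)) (v (e 1)) (v (e 2)) (v (e 3)) := by
  classical
  let p (q : ι × ι) (b : β) : ℝ := 𝓡.prob (v q.1) (v q.2) b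
  have hp (q : ι × ι) : ∑ b, p q b = 1 := (𝓡.prob_mem _ _).2
  let N (e : Fin 4 ↪ ι) (b c : β) : ℕ := #{z ∈ touchingPairs G |
    z.1 ∈ 𝓡.route (v (e 0)) (v (e 1)) b ∧ z.2 ∈ 𝓡.route (v (e 2)) (v (e 3)) c}
  have htouch (ω : ι × ι → β) (hω : ∏ q, p q (ω q) ≠ 0) :
      1 ≤ ∑ e : Fin 4 ↪ ι, N e (ω (e 0, e 1)) (ω (e 2, e 3)) := by
    obtain ⟨e, x, hx, y, hy, hxy⟩ := hG (𝓡.terminal ∘ v)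
      (fun i j ↦ 𝓡.route (v i) (v j) (ω (i, j))) fun i j ↦
        𝓡.reachable _ _ _ (prod_ne_zero_iff.1 hω (i, j) (mem_univ _))
    refine le_trans (card_pos.2 ⟨⟨x, y⟩, mem_filter.2 ⟨mem_touchingPairs.2 hxy, hx, hy⟩⟩)
      (single_le_sum (f := fun e : Fin 4 ↪ ι ↦ N e (ω (e 0, e 1)) (ω (e 2, e 3)))
        (fun _ _ ↦ Nat.zero_le _) (mem_univ e))
  calc (1 : ℝ) = ∑ ω : ι × ι → β, ∏ q, p q (ω q) := by
        rw [← Fintype.piFinset_univ, ← prod_univ_sum, prod_eq_one fun q _ ↦ hp q]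
    _ ≤ ∑ ω : ι × ι → β, (∏ q, p q (ω q)) *
          ∑ e : Fin 4 ↪ ι, (N e (ω (e 0, e 1)) (ω (e 2, e 3)) : ℝ) := by
        refine sum_le_sum fun ω _ ↦ ?_
        rcases eq_or_ne (∏ q, p q (ω q)) 0 with hω | hω
        · simp [hω]
        · exact le_mul_of_one_le_right (prod_nonneg fun q _ ↦ (𝓡.prob_mem _ _).1 _)
            (mod_cast htouch ω hω)
    _ = ∑ e : Fin 4 ↪ ι, 𝓡.contacts (v (e 0)) (v (e 1)) (v (e 2)) (v (e 3)) := by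
        simp only [mul_sum]
        rw [sum_comm]
        refine sum_congr rfl fun e _ ↦ ?_
        have hne : (e 0, e 1) ≠ (e 2, e 3) := by simp
        rw [contacts_eq_sum_prob, sum_prod_mul_pair hp hne fun b c ↦ (N e b c : ℝ)]

theorem sum_contacts [Fintype α] :
    ∑ η : Fin 4 → α, 𝓡.contacts (η 0) (η 1) (η 2) (η 3) =
      ∑ z ∈ touchingPairs G, 𝓡.congestion z.1 * 𝓡.congestion z.2 := by
  simp only [contacts]
  rw [sum_comm]
  refine sum_congr rfl fun z _ ↦ ?_
  rw [sum_fin_four]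
  simp only [congestion, sum_mul]
  simp only [mul_sum]
  rfl

theorem sum_contacts_le [Fintype α] {Λ : ℝ} (hΛ : ∀ x, 𝓡.congestion x ≤ Λ) :
    ∑ η : Fin 4 → α, 𝓡.contacts (η 0) (η 1) (η 2) (η 3) ≤
      (Fintype.card V + 2 * #G.edgeFinset) * Λ ^ 2 :=
  calc ∑ η : Fin 4 → α, 𝓡.contacts (η 0) (η 1) (η 2) (η 3)
      = ∑ z ∈ touchingPairs G, 𝓡.congestion z.1 * 𝓡.congestion z.2 := sum_contacts
    _ ≤ ∑ z ∈ touchingPairs G, Λ ^ 2 := sum_le_sum fun z _ ↦ by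
        rw [sq]
        exact mul_le_mul (hΛ _) (hΛ _) (congestion_nonneg _) ((congestion_nonneg z.1).trans (hΛ _))
    _ = (Fintype.card V + 2 * #G.edgeFinset) * Λ ^ 2 := by
        rw [sum_const, card_touchingPairs, nsmul_eq_mul, Nat.cast_add, Nat.cast_mul, Nat.cast_two]

theorem one_le_card_mul_expect_contacts [Fintype α] [Nonempty α] [Fintype ι]
    (hG : HasTouchingRoutes ι G) : 1 ≤ Fintype.card (Fin 4 ↪ ι) *
      𝔼 η : Fin 4 → α, 𝓡.contacts (η 0) (η 1) (η 2) (η 3) := by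
  classical
  calc (1 : ℝ) = 𝔼 _v : ι → α, 1 := (expect_const univ_nonempty 1).symm
    _ ≤ 𝔼 v : ι → α, ∑ e : Fin 4 ↪ ι, 𝓡.contacts (v (e 0)) (v (e 1)) (v (e 2)) (v (e 3)) :=
        expect_le_expect fun v _ ↦ one_le_sum_contacts hG v
    _ = ∑ _e : Fin 4 ↪ ι, 𝔼 η : Fin 4 → α, 𝓡.contacts (η 0) (η 1) (η 2) (η 3) := by
        rw [expect_sum_comm]
        exact sum_congr rfl fun e _ ↦
          expect_comp_embedding e fun η ↦ 𝓡.contacts (η 0) (η 1) (η 2) (η 3)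
    _ = _ := by rw [sum_const, card_univ, nsmul_eq_mul]

theorem card_pow_four_le [Fintype α] [Nonempty α] [Fintype ι] (hG : HasTouchingRoutes ι G) {Λ : ℝ}
    (hΛ : ∀ x, 𝓡.congestion x ≤ Λ) : (Fintype.card α : ℝ) ^ 4 ≤
      Fintype.card ι ^ 4 * ((Fintype.card V + 2 * #G.edgeFinset) * Λ ^ 2) := by
  have hembeddings : (Fintype.card (Fin 4 ↪ ι) : ℝ) ≤ Fintype.card ι ^ 4 := by
    rw [Fintype.card_embedding_eq, Fintype.card_fin]
    exact mod_cast Nat.descFactorial_le_pow _ _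
  have hone := one_le_card_mul_expect_contacts (𝓡 := 𝓡) hG
  rw [Fintype.expect_eq_sum_div_card, ← mul_div_assoc, one_le_div (by positivity),
    Fintype.card_fun, Fintype.card_fin, Nat.cast_pow] at hone
  exact hone.trans (mul_le_mul hembeddings (sum_contacts_le hΛ)
    (sum_nonneg fun η _ ↦ contacts_nonneg ..) (by positivity))

end RandomRouting

end RandomRouting

section ClusterRouting

variable {V : Type*} [Fintype V] {G : SimpleGraph V}

noncomputable instance : Fintype (Cluster G) := .ofFinite _

/-- The probability that `i` is a member of a cluster with law `μ`. -/
noncomputable def memberProb [DecidableEq V] (μ : Cluster G → ℝ) (i : V) : ℝ :=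
  ∑ K with i ∈ K.members, μ K

/-- The probability that `i` and `j` are both members of a cluster with law `μ`. -/
noncomputable def pairProb [DecidableEq V] (μ : Cluster G → ℝ) (i j : V) : ℝ :=
  ∑ K with i ∈ K.members ∧ j ∈ K.members, μ K

/-- The probability that `i` is a member of a cluster with law `μ` and its route to the center
visits `x`. -/
noncomputable def memberVisitProb [DecidableEq V] (μ : Cluster G → ℝ) (i x : V) : ℝ :=
  ∑ K with i ∈ K.members ∧ x ∈ K.route i, μ K

/-- Minimax between vertex weights `s` and clusters `K`, the loss being the total weight of the
routes of `K`. -/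
theorem exists_sum_memberVisitProb_le [DecidableEq V] [Nonempty V] {D : ℝ} (hD : 0 ≤ D)
    (h : ∀ s ∈ stdSimplex ℝ V, ∃ K : Cluster G, ∀ u ∈ K.members, ∑ x ∈ K.route u, s x ≤ D) :
    ∃ μ ∈ stdSimplex ℝ (Cluster G), ∀ x, ∑ i, memberVisitProb μ i x ≤ Fintype.card V * D := by
  let load : Matrix (Cluster G) V ℝ := fun K x ↦ #{i ∈ K.members | x ∈ K.route i}
  obtain ⟨μ, hμ, hload⟩ := exists_mem_stdSimplex_vecMul_le load (t := Fintype.card V * D)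
    fun s hs ↦ by
      obtain ⟨K, hK⟩ := h s hs
      refine ⟨K, ?_⟩
      calc load.mulVec s K = ∑ i ∈ K.members, ∑ x ∈ K.route i, s x := by
            simp only [load, Matrix.mulVec, dotProduct, natCast_card_filter, sum_mul, ite_mul,
              one_mul, zero_mul]
            rw [sum_comm]
            simp only [sum_ite_mem, univ_inter]
        _ ≤ ∑ _i ∈ K.members, D := sum_le_sum hK
        _ = #K.members * D := by rw [sum_const, nsmul_eq_mul]
        _ ≤ Fintype.card V * D := by gcongr; exact card_le_univ _
  refine ⟨μ, hμ, fun x ↦ (hload x).trans_eq' ?_⟩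
  simp only [load, memberVisitProb, Matrix.vecMul, dotProduct, sum_filter, card_filter,
    Nat.cast_sum, Nat.cast_ite, mul_sum]
  rw [sum_comm]
  refine sum_congr rfl fun K _ ↦ ?_
  simp only [ite_and, sum_ite_mem, univ_inter, mul_ite, Nat.cast_one, Nat.cast_zero, mul_one,
    mul_zero]

variable [DecidableEq V] {μ : Cluster G → ℝ}

theorem memberProb_le_one (hμ : μ ∈ stdSimplex ℝ (Cluster G)) (i : V) : memberProb μ i ≤ 1 :=
  hμ.2 ▸ sum_le_univ_sum_of_nonneg hμ.1

theorem two_thirds_mul_card_le_sum_memberProb (hμ : μ ∈ stdSimplex ℝ (Cluster G)) :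
    2 / 3 * (Fintype.card V : ℝ) ≤ ∑ i, memberProb μ i :=
  calc 2 / 3 * (Fintype.card V : ℝ) = ∑ K, μ K * (2 / 3 * Fintype.card V) := by
        rw [← sum_mul, hμ.2, one_mul]
    _ ≤ ∑ K, μ K * #K.members :=
        sum_le_sum fun K _ ↦ mul_le_mul_of_nonneg_left K.two_thirds_lt_card.le (hμ.1 K)
    _ = ∑ i, memberProb μ i := by
        simp only [memberProb, sum_filter]
        rw [sum_comm]
        simp [mul_comm]

theorem memberProb_add_memberProb_le (hμ : μ ∈ stdSimplex ℝ (Cluster G)) (i j : V) :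
    memberProb μ i + memberProb μ j ≤ 1 + pairProb μ i j := by
  classical
  rw [memberProb, memberProb, ← sum_union_inter, ← filter_and]
  exact add_le_add_left (hμ.2 ▸ sum_le_univ_sum_of_nonneg hμ.1) _

variable (μ) in
/-- The vertices belonging to a cluster with law `μ` with probability at least `11 / 20`: any two
of them are in the cluster together with probability at least `1 / 10`. -/
abbrev LikelyMember : Type _ :=
  {i : V // 11 / 20 ≤ memberProb μ i}

theorem one_tenth_le_pairProb (hμ : μ ∈ stdSimplex ℝ (Cluster G)) (i j : LikelyMember μ) :
    1 / 10 ≤ pairProb μ i j := by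
  linarith [memberProb_add_memberProb_le hμ i j, i.2, j.2]

theorem card_le_four_mul_card_likelyMember (hμ : μ ∈ stdSimplex ℝ (Cluster G)) :
    (Fintype.card V : ℝ) ≤ 4 * Fintype.card (LikelyMember μ) := by
  have hle (i : V) : memberProb μ i ≤ 11 / 20 + if 11 / 20 ≤ memberProb μ i then 9 / 20 else 0 := by
    split_ifs with h
    · linarith [memberProb_le_one hμ i]
    · linarith
  have hsum := (two_thirds_mul_card_le_sum_memberProb hμ).trans (sum_le_sum fun i _ ↦ hle i)
  rw [sum_add_distrib, sum_const, card_univ, nsmul_eq_mul, ← sum_filter, sum_const, nsmul_eq_mul,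
    ← Fintype.card_subtype] at hsum
  linarith

/-- To route from `i` to `j`, choose a cluster with law `μ` conditioned on having both as members,
and go through its center. -/
noncomputable def clusterRouting (hμ : μ ∈ stdSimplex ℝ (Cluster G)) :
    RandomRouting G (LikelyMember μ) (Cluster G) where
  terminal := Subtype.val
  prob i j K := if i.1 ∈ K.members ∧ j.1 ∈ K.members then μ K / pairProb μ i j else 0
  route i j K := K.route i ∪ K.route j
  prob_mem i j := by
    have hpos : 0 < pairProb μ i j := by linarith [one_tenth_le_pairProb hμ i j]
    refine ⟨fun K ↦ ?_, ?_⟩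
    · have hK := hμ.1 K
      positivity
    · rw [← sum_filter, ← sum_div]
      exact div_self hpos.ne'
  reachable i j K h := by
    obtain ⟨hi, hj⟩ : i.1 ∈ K.members ∧ j.1 ∈ K.members := by
      by_contra hij
      exact h (if_neg hij)
    rw [coe_union]
    exact ((K.reachable i hi).mono Set.subset_union_left).trans
      ((K.reachable j hj).mono Set.subset_union_right).symm

theorem visitProb_clusterRouting_le (hμ : μ ∈ stdSimplex ℝ (Cluster G)) (i j : LikelyMember μ)
    (x : V) : (clusterRouting hμ).visitProb i j x ≤
      10 * (memberVisitProb μ i x + memberVisitProb μ j x) := by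
  simp only [RandomRouting.visitProb, clusterRouting, memberVisitProb, sum_filter]
  rw [← sum_add_distrib, mul_sum]
  refine sum_le_sum fun K _ ↦ ?_
  have hK : 0 ≤ μ K := hμ.1 K
  have hdiv : μ K / pairProb μ i j ≤ 10 * μ K := by
    rw [div_le_iff₀ (by linarith [one_tenth_le_pairProb hμ i j])]
    nlinarith [one_tenth_le_pairProb hμ i j]
  by_cases hij : i.1 ∈ K.members ∧ j.1 ∈ K.members
  · by_cases hi : x ∈ K.route i <;> by_cases hj : x ∈ K.route j <;>
      simp only [hij, hi, hj, mem_union, and_self, or_self, or_true, true_or, and_false,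
        if_true, if_false] <;> linarith
  · rw [if_neg hij, zero_mul]
    positivity

theorem congestion_clusterRouting_le (hμ : μ ∈ stdSimplex ℝ (Cluster G)) (x : V) :
    (clusterRouting hμ).congestion x ≤ 20 * Fintype.card V * ∑ i, memberVisitProb μ i x := by
  have hcard : (Fintype.card (LikelyMember μ) : ℝ) ≤ Fintype.card V :=
    mod_cast Fintype.card_subtype_le _
  have hnonneg (i : V) : 0 ≤ memberVisitProb μ i x := sum_nonneg fun K _ ↦ hμ.1 K
  have hsum : ∑ i : LikelyMember μ, memberVisitProb μ i x ≤ ∑ i, memberVisitProb μ i x := by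
    rw [← sum_subtype {i | 11 / 20 ≤ memberProb μ i} (by simp) (memberVisitProb μ · x)]
    exact sum_le_univ_sum_of_nonneg hnonneg
  calc (clusterRouting hμ).congestion x
      ≤ ∑ i : LikelyMember μ, ∑ j : LikelyMember μ,
          10 * (memberVisitProb μ i x + memberVisitProb μ j x) :=
        sum_le_sum fun i _ ↦ sum_le_sum fun j _ ↦ visitProb_clusterRouting_le hμ i j x
    _ = 20 * Fintype.card (LikelyMember μ) * ∑ i : LikelyMember μ, memberVisitProb μ i x := by
        simp only [← mul_sum, sum_add_distrib, sum_const, card_univ, nsmul_eq_mul]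
        ring
    _ ≤ _ := by
        gcongr
        exact sum_nonneg fun i _ ↦ hnonneg i

end ClusterRouting

section Separators

variable {V : Type*} [Fintype V] {G : SimpleGraph V}

theorem isSeparator_univ [DecidableEq V] : IsSeparator G univ :=
  ⟨∅, ∅, by simp, by simp, by simp, by simp, by simp, by simp, by simp⟩

/-- The non-isolated vertices lie in a set `A` of `⌊2 * n / 3⌋` vertices, and no edge joins `A` to
its complement. -/
theorem isSeparator_empty_of_three_mul_card_edgeFinset_le [DecidableEq V] [DecidableRel G.Adj]
    (hV : Fintype.card V ≠ 1) (hE : 3 * #G.edgeFinset ≤ Fintype.card V) : IsSeparator G ∅ := by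
  have hcard : #{v | 0 < G.degree v} ≤ 2 * #G.edgeFinset :=
    calc #{v | 0 < G.degree v} = ∑ v with 0 < G.degree v, 1 := card_eq_sum_ones _
      _ ≤ ∑ v with 0 < G.degree v, G.degree v := sum_le_sum fun v hv ↦ (mem_filter.1 hv).2
      _ ≤ ∑ v, G.degree v := sum_le_sum_of_subset (subset_univ _)
      _ = 2 * #G.edgeFinset := G.sum_degrees_eq_twice_card_edges
  obtain ⟨A, hA, -, hcardA⟩ := exists_subsuperset_card_eq (subset_univ {v | 0 < G.degree v})
    (n := 2 * Fintype.card V / 3) (by lia) (by rw [card_univ]; lia)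
  have hcompl := card_add_card_compl A
  refine ⟨A, Aᶜ, by simp, by simp, by simp, disjoint_compl_right, ?_, ?_, fun u _ v hv hadj ↦
    mem_compl.1 hv (hA (by simpa [G.degree_pos_iff_exists_adj] using ⟨u, hadj.symm⟩))⟩
  all_goals
    rw [div_mul_eq_mul_div, le_div_iff₀' three_pos]
    exact mod_cast (by lia)

variable [DecidableRel G.Adj] {ι : Type*} [Fintype ι]

theorem one_le_sq_mul_of_forall_exists_cluster [Nonempty V] (hG : HasTouchingRoutes ι G) {D : ℝ}
    (hD : 0 ≤ D)
    (h : ∀ s ∈ stdSimplex ℝ V, ∃ K : Cluster G, ∀ u ∈ K.members, ∑ x ∈ K.route u, s x ≤ D) :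
    1 ≤ (320 * Fintype.card ι ^ 2 * D) ^ 2 * (Fintype.card V + 2 * #G.edgeFinset) := by
  classical
  obtain ⟨μ, hμ, hvisit⟩ := exists_sum_memberVisitProb_le hD h
  set n : ℝ := (Fintype.card V : ℝ)
  have hn : 0 < n := Nat.cast_pos.2 Fintype.card_pos
  have hα := card_le_four_mul_card_likelyMember hμ
  have : Nonempty (LikelyMember μ) :=
    Fintype.card_pos_iff.1 (Nat.cast_pos.1 (by linarith : (0 : ℝ) < Fintype.card (LikelyMember μ)))
  have hcongestion (x : V) : (clusterRouting hμ).congestion x ≤ 20 * n * (n * D) :=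
    (congestion_clusterRouting_le hμ x).trans (mul_le_mul_of_nonneg_left (hvisit x) (by positivity))
  refine le_of_mul_le_mul_right ?_ (pow_pos hn 4)
  calc 1 * n ^ 4 ≤ (4 * Fintype.card (LikelyMember μ)) ^ 4 := by
        rw [one_mul]
        gcongr
    _ = 256 * (Fintype.card (LikelyMember μ) : ℝ) ^ 4 := by ring
    _ ≤ 256 * (Fintype.card ι ^ 4 * ((n + 2 * #G.edgeFinset) * (20 * n * (n * D)) ^ 2)) := by
        gcongr
        exact RandomRouting.card_pow_four_le hG hcongestion
    _ = (320 * Fintype.card ι ^ 2 * D) ^ 2 * (n + 2 * #G.edgeFinset) * n ^ 4 := by ring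

theorem exists_isSeparator_card_le_sqrt_mul_log [DecidableEq V] [Nonempty V]
    (hG : HasTouchingRoutes ι G) : ∃ S, IsSeparator G S ∧ (#S : ℝ) ≤ 1300 * Fintype.card ι ^ 2 *
      √(Fintype.card V + 2 * #G.edgeFinset) * (Nat.log 2 (2 * Fintype.card V) + 1) := by
  by_contra! hsep
  have := hG.nonempty
  set t : ℝ := (Fintype.card ι : ℝ)
  set N : ℝ := Fintype.card V + 2 * #G.edgeFinset
  set L : ℝ := Nat.log 2 (2 * Fintype.card V) + 1
  have ht : 0 < t := Nat.cast_pos.2 Fintype.card_pos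
  have hN : 0 < N := by positivity
  have hL : 0 < L := Nat.cast_add_one_pos _
  have hk : 0 < 1300 * t ^ 2 * √N * L := by positivity
  have hone := one_le_sq_mul_of_forall_exists_cluster hG (by positivity) fun s hs ↦
    exists_cluster_sum_route_le hs hk (by simpa using (hsep univ isSeparator_univ).le) hsep
  have hlt : (320 * t ^ 2 * (4 * L / (1300 * t ^ 2 * √N * L))) ^ 2 * N < 1 :=
    calc (320 * t ^ 2 * (4 * L / (1300 * t ^ 2 * √N * L))) ^ 2 * N
        = (64 / 65) ^ 2 * (N / √N ^ 2) := by
          field_simp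
          norm_num
      _ = (64 / 65) ^ 2 := by rw [Real.sq_sqrt hN.le, div_self hN.ne', mul_one]
      _ < 1 := by norm_num
  exact hlt.not_ge hone

theorem natLog_two_mul_add_one_le {n m : ℕ} (hm : 2 ≤ m) (hnm : n ≤ 3 * m) :
    (Nat.log 2 (2 * n) + 1 : ℝ) ≤ 5 * Real.logb 2 m := by
  have hm₂ : (2 : ℝ) ≤ m := mod_cast hm
  have hlog : 1 ≤ Real.logb 2 m := by
    rwa [Real.le_logb_iff_rpow_le one_lt_two (by positivity), Real.rpow_one]
  have hpow : 2 * n ≤ m ^ 4 :=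
    calc 2 * n ≤ 2 ^ 3 * m := by lia
      _ ≤ m ^ 3 * m := by gcongr
      _ = m ^ 4 := (pow_succ m 3).symm
  calc (Nat.log 2 (2 * n) + 1 : ℝ) ≤ Nat.log 2 (m ^ 4) + Real.logb 2 m := by gcongr
    _ ≤ Real.logb 2 (m ^ 4) + Real.logb 2 m := by
      gcongr
      exact mod_cast Real.natLog_le_logb (m ^ 4) 2
    _ = 5 * Real.logb 2 m := by
      rw [Real.logb_pow]
      push_cast
      ring

end Separators

theorem string_graph_separator_general {V ι : Type*} [Fintype V] [DecidableEq V] [Fintype ι]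
    {G : SimpleGraph V} [DecidableRel G.Adj] (hG : HasTouchingRoutes ι G)
    (hm : 2 ≤ #G.edgeFinset) : ∃ S, IsSeparator G S ∧ (#S : ℝ) ≤
      19500 * Fintype.card ι ^ 2 * √(#G.edgeFinset) * Real.logb 2 (#G.edgeFinset) := by
  set m := #G.edgeFinset
  have hlog : 0 ≤ Real.logb 2 m := Real.logb_nonneg one_lt_two (mod_cast one_le_two.trans hm)
  rcases le_total (3 * m) (Fintype.card V) with hnm | hnm
  · refine ⟨∅, isSeparator_empty_of_three_mul_card_edgeFinset_le (by lia) hnm, ?_⟩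
    rw [card_empty, Nat.cast_zero]
    positivity
  obtain ⟨e, -⟩ := card_pos.1 (two_pos.trans_le hm)
  have : Nonempty V := ⟨e.out.1⟩
  obtain ⟨S, hS, hcard⟩ := exists_isSeparator_card_le_sqrt_mul_log hG
  have hsqrt : √(Fintype.card V + 2 * m) ≤ 3 * √m := by
    rw [Real.sqrt_le_left (by positivity), mul_pow, Real.sq_sqrt (by positivity)]
    exact mod_cast (by lia)
  refine ⟨S, hS, hcard.trans ?_⟩
  calc 1300 * Fintype.card ι ^ 2 * √(Fintype.card V + 2 * m) * (Nat.log 2 (2 * Fintype.card V) + 1)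
      ≤ 1300 * Fintype.card ι ^ 2 * (3 * √m) * (5 * Real.logb 2 m) := by
        gcongr
        exact natLog_two_mul_add_one_le hm hnm
    _ = 19500 * Fintype.card ι ^ 2 * √m * Real.logb 2 m := by ring

/-- There is an absolute constant `d > 0` such that every string graph with `m ≥ 2` edges
has a separator of size at most `d·√m·log₂ m`. -/
theorem string_graph_separator :
    ∃ d : ℝ, 0 < d ∧
      ∀ (V : Type) [Fintype V] [DecidableEq V] (G : SimpleGraph V) [DecidableRel G.Adj],
        IsStringGraph G → 2 ≤ G.edgeFinset.card →
        ∃ S : Finset V, IsSeparator G S ∧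
          (S.card : ℝ) ≤ d * Real.sqrt (G.edgeFinset.card) *
            Real.logb 2 (G.edgeFinset.card) :=
  ⟨19500 * Fintype.card (Fin 5) ^ 2, by simp, fun _ _ _ _ _ hG hm ↦
    string_graph_separator_general hG.hasTouchingRoutes hm⟩
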